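/- arXiv:1105.4489 — 2 statements merged into one kernel-verified Lean document; each statement's English description precedes it below -/
import Mathlib

section
/- The 6-dimensional real nilpotent Lie algebra L_{6,11} does not admit a nice basis: for every basis {X_1,...,X_6} of L_{6,11}, writing [X_i,X_j] = Σ_k c_ij^k X_k, either there exist i, j with more than one index k such that c_ij^k ≠ 0, or there exist i, k with more than one index j such that c_ij^k ≠ 0. -/
open Matrix BigOperators Polynomial

noncomputable section

abbrev Law (n : ℕ) := (Fin n → ℝ) → (Fin n → ℝ) → (Fin n → ℝ)

/-- `i`-th canonical basis vector of `ℝ^n`. -/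
def bVec {n : ℕ} (i : Fin n) : Fin n → ℝ := Pi.single i 1

def IsBilin {n : ℕ} (μ : Law n) : Prop :=
  (∀ X, IsLinearMap ℝ (μ X)) ∧ (∀ Y, IsLinearMap ℝ (fun X => μ X Y))

def IsSkew {n : ℕ} (μ : Law n) : Prop := ∀ X Y, μ X Y = - μ Y X

def IsJacobi {n : ℕ} (μ : Law n) : Prop :=
  ∀ X Y Z, μ (μ X Y) Z + μ (μ Y Z) X + μ (μ Z X) Y = 0

def IsLieLaw {n : ℕ} (μ : Law n) : Prop := IsBilin μ ∧ IsSkew μ ∧ IsJacobi μ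

/-- lower central series of the law `μ`. -/
def lcs {n : ℕ} (μ : Law n) : ℕ → Submodule ℝ (Fin n → ℝ)
  | 0 => ⊤
  | k + 1 => Submodule.span ℝ {z | ∃ x y, y ∈ lcs μ k ∧ z = μ x y}

def IsNilpotentLaw {n : ℕ} (μ : Law n) : Prop :=
  IsLieLaw μ ∧ ∃ k, lcs μ k = ⊥

/-- the action of `GL_n(ℝ)` on laws: `(g·μ)(X,Y) = g μ(g⁻¹X, g⁻¹Y)`. -/
def act {n : ℕ} (g : GL (Fin n) ℝ) (μ : Law n) : Law n :=
  fun X Y =>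
    (g : Matrix (Fin n) (Fin n) ℝ).mulVec
      (μ (((g⁻¹ : GL (Fin n) ℝ) : Matrix (Fin n) (Fin n) ℝ).mulVec X)
         (((g⁻¹ : GL (Fin n) ℝ) : Matrix (Fin n) (Fin n) ℝ).mulVec Y))

def IsDerivation {n : ℕ} (μ : Law n) (ψ : Matrix (Fin n) (Fin n) ℝ) : Prop :=
  ∀ X Y, ψ.mulVec (μ X Y) = μ (ψ.mulVec X) Y + μ X (ψ.mulVec Y)

/-- the unnormalized moment map `m(μ) = 4 Ric_μ`, as a matrix in the canonical basis. -/
def momentMap {n : ℕ} (μ : Law n) : Matrix (Fin n) (Fin n) ℝ :=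
  Matrix.of fun k l =>
    4 * (-(1/2) * ∑ i, ∑ j, μ (bVec k) (bVec i) j * μ (bVec l) (bVec i) j
      + (1/4) * ∑ i, ∑ j, μ (bVec i) (bVec j) k * μ (bVec i) (bVec j) l)

def IsEinsteinNilradical {n : ℕ} (μ : Law n) : Prop :=
  ∃ g : GL (Fin n) ℝ, ∃ c : ℝ, ∃ φ : Matrix (Fin n) (Fin n) ℝ,
    c < 0 ∧ φ.IsSymm ∧ IsDerivation (act g μ) φ ∧
    momentMap (act g μ) = c • (1 : Matrix (Fin n) (Fin n) ℝ) + φ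

/-- build a (bilinear) law from a table `c` of structure constants on the
canonical basis, antisymmetrized: `[e_i, e_j] = c i j - c j i`. -/
def mkLaw {n : ℕ} (c : Fin n → Fin n → Fin n → ℝ) : Law n :=
  fun X Y k => ∑ i, ∑ j, X i * Y j * (c i j k - c j i k)

/-- structure constants of `L_{6,11}`. -/
def c611 : Fin 6 → Fin 6 → Fin 6 → ℝ := fun i j =>
  if i = 0 ∧ j = 1 then Pi.single 2 1
  else if i = 0 ∧ j = 2 then Pi.single 3 1
  else if i = 0 ∧ j = 3 then Pi.single 5 1
  else if i = 1 ∧ j = 2 then Pi.single 5 1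
  else if i = 1 ∧ j = 4 then Pi.single 5 1
  else 0

/-- the Lie algebra law of `L_{6,11}`. -/
def law611 : Law 6 := mkLaw c611

/-!
For a fixed basis, the subspaces spanned by basis vectors form a *distributive* lattice, and if the
basis is nice then this lattice is closed under brackets and under transporters
`{x | [u, x] ∈ W for all u ∈ U}`. Hence every subspace obtained from `0` and `L` by these operations
lies in one and the same distributive lattice. For `L = L_{6,11}`, with basis `x_i = bVec (i - 1)`,
let `Z₁, Z₂, Z₃` be the upper central series and `A` the transporter of `Z₃` into `Z₁`. The three
subspaces

* `[L, L] = ⟨x_3, x_4, x_6⟩`,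
* `Z₂ = ⟨x_4, x_5, x_6⟩`,
* the centralizer `⟨x_4, x_6, x_3 - x_5⟩` of `A = ⟨x_2, …, x_6⟩`

violate distributivity: `x_3 - x_5` lies in the sum of the first two, but the third meets
each of them only in `⟨x_4, x_6⟩`.
-/

section Coordinate

variable {ι R M : Type*} [Semiring R] [AddCommMonoid M] [Module R M]
  {b : Module.Basis ι R M} {U W W₁ W₂ : Submodule R M}

/-- A coordinate subspace for the basis `b`: one spanned by the basis vectors it contains. It is
encoded by the condition that the basis vectors occurring in an element of `W` lie in `W`. -/
def IsCoordinate (b : Module.Basis ι R M) (W : Submodule R M) : Prop :=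
  ∀ x ∈ W, ∀ i, b.repr x i ≠ 0 → b i ∈ W

theorem mem_of_forall_repr_ne_zero (b : Module.Basis ι R M) {x : M}
    (h : ∀ i, b.repr x i ≠ 0 → b i ∈ W) : x ∈ W := by
  refine Submodule.span_le.2 ?_ (b.mem_span_repr_support x)
  rintro _ ⟨i, hi, rfl⟩
  exact h i (Finsupp.mem_support_iff.1 hi)

theorem isCoordinate_top : IsCoordinate b (⊤ : Submodule R M) :=
  fun _ _ _ _ => Submodule.mem_top

theorem isCoordinate_bot : IsCoordinate b (⊥ : Submodule R M) := by
  rintro x hx i hi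
  simp [(Submodule.mem_bot R).1 hx] at hi

theorem isCoordinate_of_le_span (h : W ≤ Submodule.span R (b '' {i | b i ∈ W})) :
    IsCoordinate b W :=
  fun _ hx _ hi => b.mem_span_image.1 (h hx) (Finsupp.mem_support_iff.2 hi)

namespace IsCoordinate

theorem le_of_forall_basis_mem (hU : IsCoordinate b U) (h : ∀ i, b i ∈ U → b i ∈ W) : U ≤ W :=
  fun x hx => mem_of_forall_repr_ne_zero b fun i hi => h i (hU x hx i hi)

theorem inf_sup_le (hU : IsCoordinate b U) (h₁ : IsCoordinate b W₁) (h₂ : IsCoordinate b W₂) :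
    U ⊓ (W₁ ⊔ W₂) ≤ U ⊓ W₁ ⊔ U ⊓ W₂ := by
  rintro x ⟨hxU, hx⟩
  obtain ⟨y, hy, z, hz, rfl⟩ := Submodule.mem_sup.1 hx
  refine mem_of_forall_repr_ne_zero b fun i hi => ?_
  have hiU : b i ∈ U := hU _ hxU i hi
  by_cases hyi : b.repr y i = 0
  · have hzi : b.repr z i ≠ 0 := by simpa [hyi] using hi
    exact Submodule.mem_sup_right ⟨hiU, h₂ z hz i hzi⟩
  · exact Submodule.mem_sup_left ⟨hiU, h₁ y hy i hyi⟩

end IsCoordinate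

end Coordinate

section Transporter

variable {R M : Type*} [CommSemiring R] [AddCommMonoid M] [Module R M]

/-- The transporter `{x | B u x ∈ W for all u ∈ U}` of `U` into `W` for a bilinear product `B`;
for `W = ⊥` and a Lie bracket this is the centralizer of `U`. -/
def transporter (B : M →ₗ[R] M →ₗ[R] M) (U W : Submodule R M) : Submodule R M :=
  ⨅ u ∈ U, W.comap (B u)

theorem mem_transporter {B : M →ₗ[R] M →ₗ[R] M} {U W : Submodule R M} {x : M} :
    x ∈ transporter B U W ↔ ∀ u ∈ U, B u x ∈ W := by
  simp [transporter]

/-- The upper central series, for `B` a Lie bracket: `0`, the center, and so on, each term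
consisting of the `x` with all `B y x` in the previous one. -/
def upperCentral (B : M →ₗ[R] M →ₗ[R] M) : ℕ → Submodule R M
  | 0 => ⊥
  | n + 1 => transporter B ⊤ (upperCentral B n)

theorem mem_upperCentral_zero {B : M →ₗ[R] M →ₗ[R] M} {x : M} :
    x ∈ upperCentral B 0 ↔ x = 0 :=
  Submodule.mem_bot R

theorem mem_upperCentral_succ {B : M →ₗ[R] M →ₗ[R] M} {n : ℕ} {x : M} :
    x ∈ upperCentral B (n + 1) ↔ ∀ y, B y x ∈ upperCentral B n := by
  simp [upperCentral, mem_transporter]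

end Transporter

section Nice

variable {ι R M : Type*} [CommSemiring R] [AddCommMonoid M] [Module R M]

/-- A basis `b` is nice for the bilinear product `B` if every `B (b i) (b j)` involves at most one
basis vector, and, for fixed `i`, every basis vector occurs in `B (b i) (b j)` for at most
one `j`. -/
structure IsNice (B : M →ₗ[R] M →ₗ[R] M) (b : Module.Basis ι R M) : Prop where
  subsingleton_support (i j : ι) : {k | b.repr (B (b i) (b j)) k ≠ 0}.Subsingleton
  subsingleton_right (i k : ι) : {j | b.repr (B (b i) (b j)) k ≠ 0}.Subsingleton

namespace IsNice

variable {B : M →ₗ[R] M →ₗ[R] M} {b : Module.Basis ι R M}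

theorem basis_apply_eq_smul (h : IsNice B b) {i j k : ι}
    (hk : b.repr (B (b i) (b j)) k ≠ 0) :
    B (b i) (b j) = b.repr (B (b i) (b j)) k • b k := by
  apply b.repr.injective
  ext l
  by_cases hl : b.repr (B (b i) (b j)) l = 0
  · have hkl : k ≠ l := by rintro rfl; exact hk hl
    simp [hl, hkl]
  · obtain rfl : l = k := h.subsingleton_support i j hl hk
    simp

theorem repr_apply_eq_mul (h : IsNice B b) {i j k : ι}
    (hk : b.repr (B (b i) (b j)) k ≠ 0) (x : M) :
    b.repr (B (b i) x) k = b.repr x j * b.repr (B (b i) (b j)) k := by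
  have hfun : b.coord k ∘ₗ B (b i) = b.repr (B (b i) (b j)) k • b.coord j := by
    refine b.ext fun l => ?_
    by_cases hl : b.repr (B (b i) (b l)) k = 0
    · have hlj : l ≠ j := by rintro rfl; exact hk hl
      simp [hl, hlj]
    · obtain rfl : l = j := h.subsingleton_right i k hl hk
      simp
  simpa [mul_comm] using LinearMap.congr_fun hfun x

theorem isCoordinate_transporter [NoZeroDivisors R] (h : IsNice B b) {U W : Submodule R M}
    (hU : IsCoordinate b U) (hW : IsCoordinate b W) : IsCoordinate b (transporter B U W) := by
  intro x hx j hj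
  suffices U ≤ W.comap (B.flip (b j)) from mem_transporter.2 this
  refine hU.le_of_forall_basis_mem fun i hi => ?_
  suffices B (b i) (b j) ∈ W from this
  refine mem_of_forall_repr_ne_zero b fun k hk => ?_
  refine hW (B (b i) x) (mem_transporter.1 hx _ hi) k ?_
  rw [h.repr_apply_eq_mul hk]
  exact mul_ne_zero hj hk

theorem isCoordinate_upperCentral [NoZeroDivisors R] (h : IsNice B b) :
    ∀ n, IsCoordinate b (upperCentral B n)
  | 0 => isCoordinate_bot
  | n + 1 => h.isCoordinate_transporter isCoordinate_top (h.isCoordinate_upperCentral n)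

end IsNice

theorem IsNice.isCoordinate_map₂ {K V : Type*} [Semifield K] [AddCommMonoid V] [Module K V]
    {B : V →ₗ[K] V →ₗ[K] V} {b : Module.Basis ι K V} (h : IsNice B b) {U W : Submodule K V}
    (hU : IsCoordinate b U) (hW : IsCoordinate b W) :
    IsCoordinate b (Submodule.map₂ B U W) := by
  set S := Submodule.span K (b '' {k | b k ∈ Submodule.map₂ B U W})
  have basis_mem {i j : ι} (hi : b i ∈ U) (hj : b j ∈ W) : B (b i) (b j) ∈ S := by
    refine mem_of_forall_repr_ne_zero b fun k hk => Submodule.subset_span ⟨k, ?_, rfl⟩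
    have hmem : B (b i) (b j) ∈ Submodule.map₂ B U W := Submodule.apply_mem_map₂ B hi hj
    rw [h.basis_apply_eq_smul hk] at hmem
    exact (Submodule.smul_mem_iff _ hk).1 hmem
  refine isCoordinate_of_le_span (Submodule.map₂_le.2 fun u hu w hw => ?_)
  suffices U ≤ S.comap (B.flip w) from this hu
  refine hU.le_of_forall_basis_mem fun i hi => ?_
  suffices W ≤ S.comap (B (b i)) from this hw
  exact hW.le_of_forall_basis_mem fun j hj => basis_mem hi hj

end Nice

section L611

theorem law611_apply (x y : Fin 6 → ℝ) : law611 x y =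
    ![0, 0, x 0 * y 1 - x 1 * y 0, x 0 * y 2 - x 2 * y 0, 0,
      x 0 * y 3 - x 3 * y 0 + (x 1 * y 2 - x 2 * y 1) + (x 1 * y 4 - x 4 * y 1)] := by
  ext k
  fin_cases k <;> simp [law611, mkLaw, c611, Fin.sum_univ_six] <;> ring

theorem isBilin_mkLaw {n : ℕ} (c : Fin n → Fin n → Fin n → ℝ) : IsBilin (mkLaw c) := by
  refine ⟨fun x => ⟨fun y y' => ?_, fun a y => ?_⟩, fun y => ⟨fun x x' => ?_, fun a x => ?_⟩⟩
  all_goals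
    ext k
    simp only [mkLaw, Pi.add_apply, Pi.smul_apply, smul_eq_mul, Finset.mul_sum,
      ← Finset.sum_add_distrib]
    refine Finset.sum_congr rfl fun i _ => Finset.sum_congr rfl fun j _ => ?_
    ring

/-- The bracket of `L_{6,11}`, as a bilinear map. -/
def bracket611 : (Fin 6 → ℝ) →ₗ[ℝ] (Fin 6 → ℝ) →ₗ[ℝ] (Fin 6 → ℝ) :=
  LinearMap.mk₂ ℝ law611
    (fun x x' y => ((isBilin_mkLaw c611).2 y).map_add x x')
    (fun a x y => ((isBilin_mkLaw c611).2 y).map_smul a x)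
    (fun x y y' => ((isBilin_mkLaw c611).1 x).map_add y y')
    (fun a x y => ((isBilin_mkLaw c611).1 x).map_smul a y)

theorem bracket611_apply (x y : Fin 6 → ℝ) : bracket611 x y = law611 x y := rfl

variable {x : Fin 6 → ℝ}

theorem mem_upperCentral_one :
    x ∈ upperCentral bracket611 1 ↔ x 0 = 0 ∧ x 1 = 0 ∧ x 2 = 0 ∧ x 3 = 0 ∧ x 4 = 0 := by
  simp only [mem_upperCentral_succ (n := 0), mem_upperCentral_zero]
  constructor
  · intro h
    have bracket_x₁ := h (bVec 0)
    have bracket_x₂ := h (bVec 1)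
    simp_all [bracket611_apply, law611_apply, bVec]
  · rintro ⟨h0, h1, h2, h3, h4⟩ y
    simp [bracket611_apply, law611_apply, h0, h1, h2, h3, h4]

theorem mem_upperCentral_two :
    x ∈ upperCentral bracket611 2 ↔ x 0 = 0 ∧ x 1 = 0 ∧ x 2 = 0 := by
  simp only [mem_upperCentral_succ (n := 1), mem_upperCentral_one]
  refine ⟨fun h => ?_, fun ⟨h0, h1, h2⟩ y => by simp [bracket611_apply, law611_apply, h0, h1, h2]⟩
  have bracket_x₁ := h (bVec 0)
  have bracket_x₂ := h (bVec 1)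
  simp_all [bracket611_apply, law611_apply, bVec]

theorem mem_upperCentral_three :
    x ∈ upperCentral bracket611 3 ↔ x 0 = 0 ∧ x 1 = 0 := by
  simp only [mem_upperCentral_succ (n := 2), mem_upperCentral_two]
  refine ⟨fun h => ?_, fun ⟨h0, h1⟩ y => by simp [bracket611_apply, law611_apply, h0, h1]⟩
  have bracket_x₁ := h (bVec 0)
  have bracket_x₂ := h (bVec 1)
  simp_all [bracket611_apply, law611_apply, bVec]

theorem mem_transporter_upperCentral_three_one :
    x ∈ transporter bracket611 (upperCentral bracket611 3) (upperCentral bracket611 1) ↔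
      x 0 = 0 := by
  simp only [mem_transporter, mem_upperCentral_three, mem_upperCentral_one]
  refine ⟨fun h => ?_, fun h0 u ⟨hu0, hu1⟩ => by
    simp [bracket611_apply, law611_apply, h0, hu0, hu1]⟩
  have bracket_x₃ := h (bVec 2) (by simp [bVec])
  simpa [bracket611_apply, law611_apply, bVec] using bracket_x₃

theorem mem_centralizer_transporter :
    x ∈ transporter bracket611
        (transporter bracket611 (upperCentral bracket611 3) (upperCentral bracket611 1)) ⊥ ↔
      x 0 = 0 ∧ x 1 = 0 ∧ x 2 + x 4 = 0 := by
  rw [mem_transporter]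
  simp only [mem_transporter_upperCentral_three_one, Submodule.mem_bot]
  constructor
  · intro h
    have bracket_x₂ := h (bVec 1) (by simp [bVec])
    have bracket_x₃ := h (bVec 2) (by simp [bVec])
    simp_all [bracket611_apply, law611_apply, bVec]
  · rintro ⟨h0, h1, h24⟩ u hu
    have last : u 1 * x 2 + u 1 * x 4 = 0 := by rw [← mul_add, h24, mul_zero]
    simp [bracket611_apply, law611_apply, h0, h1, hu, last]

theorem bVec_two_mem_derived : bVec 2 ∈ Submodule.map₂ bracket611 ⊤ ⊤ := by
  have bracket_x₁_x₂ : bracket611 (bVec 0) (bVec 1) = bVec 2 := by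
    ext k
    fin_cases k <;> simp [bracket611_apply, law611_apply, bVec]
  rw [← bracket_x₁_x₂]
  exact Submodule.apply_mem_map₂ _ Submodule.mem_top Submodule.mem_top

theorem apply_four_eq_zero_of_mem_derived (hx : x ∈ Submodule.map₂ bracket611 ⊤ ⊤) : x 4 = 0 := by
  suffices Submodule.map₂ bracket611 ⊤ ⊤ ≤ LinearMap.ker (LinearMap.proj 4) from this hx
  exact Submodule.map₂_le.2 fun y _ z _ => by simp [bracket611_apply, law611_apply]

theorem not_isNice_bracket611 {ι : Type*} (b : Module.Basis ι ℝ (Fin 6 → ℝ)) :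
    ¬ IsNice bracket611 b := by
  intro h
  set D := Submodule.map₂ bracket611 ⊤ ⊤
  set Z := upperCentral bracket611
  set C := transporter bracket611 (transporter bracket611 (Z 3) (Z 1)) ⊥
  have hD : IsCoordinate b D := h.isCoordinate_map₂ isCoordinate_top isCoordinate_top
  have hZ (n : ℕ) : IsCoordinate b (Z n) := h.isCoordinate_upperCentral n
  have hC : IsCoordinate b C :=
    h.isCoordinate_transporter (h.isCoordinate_transporter (hZ 3) (hZ 1)) isCoordinate_bot
  have mem_C : bVec 2 - bVec 4 ∈ C := mem_centralizer_transporter.2 (by simp [bVec])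
  have mem_sup : bVec 2 - bVec 4 ∈ D ⊔ Z 2 :=
    Submodule.sub_mem_sup bVec_two_mem_derived (mem_upperCentral_two.2 (by simp [bVec]))
  have le_ker : C ⊓ D ⊔ C ⊓ Z 2 ≤ LinearMap.ker (LinearMap.proj 2) := by
    refine sup_le (fun x ⟨hxC, hxD⟩ => ?_) fun x ⟨_, hxZ⟩ => (mem_upperCentral_two.1 hxZ).2.2
    simpa [apply_four_eq_zero_of_mem_derived hxD] using (mem_centralizer_transporter.1 hxC).2.2
  simpa [bVec] using le_ker (hC.inf_sup_le hD (hZ 2) ⟨mem_C, mem_sup⟩)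

end L611

/-- `L_{6,11}` admits no nice basis: for every basis, either some
bracket `[X_i,X_j]` involves more than one basis vector, or some basis vector
`X_k` appears in brackets `[X_i,X_j]` for more than one `j` (for a fixed `i`). -/
theorem stmt_13 (b : Module.Basis (Fin 6) ℝ (Fin 6 → ℝ)) :
    (∃ i j : Fin 6,
      1 < (Finset.univ.filter fun k : Fin 6 =>
            b.repr (law611 (b i) (b j)) k ≠ 0).card) ∨
    (∃ i k : Fin 6,
      1 < (Finset.univ.filter fun j : Fin 6 =>
            b.repr (law611 (b i) (b j)) k ≠ 0).card) := by
  by_contra! ⟨hsupport, hright⟩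
  refine not_isNice_bracket611 b ⟨fun i j => ?_, fun i k => ?_⟩
  · simpa [bracket611_apply] using Finset.card_le_one_iff_subsingleton.1 (hsupport i j)
  · simpa [bracket611_apply] using Finset.card_le_one_iff_subsingleton.1 (hright i k)
end
end

section
/- Let μ ≠ 0 be a nilpotent Lie algebra law on ℝ^n such that every derivation of (ℝ^n, μ) is a nilpotent linear map (i.e., (ℝ^n, μ) is characteristically nilpotent, equivalently of rank zero). Then μ is not an Einstein nilradical. -/
open Matrix BigOperators Polynomial

noncomputable section

/-!
Let `ν = g · μ` satisfy `m(ν) = c I + φ`. Conjugating `φ` by `g` gives a derivation of `μ`, so `φ`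
is nilpotent; being symmetric, it vanishes, and `m(ν) = c I`. On a vector `z` with `ν(z, ·) = 0` the
negative part of `⟨m(ν) z, z⟩ = -2 ∑ |ν(z, eᵢ)|² + ∑ ⟨ν(eᵢ, eⱼ), z⟩²` disappears, so a nonzero such
`z` forces `c ≥ 0`. A nonzero nilpotent `μ` has a nonzero central vector `x`, and `z = g x`.
-/

theorem eq_zero_of_isHermitian_of_isNilpotent {ι 𝕜 : Type*} [Fintype ι] [DecidableEq ι]
    [RCLike 𝕜] {A : Matrix ι ι 𝕜} (hA : A.IsHermitian) (hnil : IsNilpotent A) : A = 0 := by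
  have hss : Module.End.IsFinitelySemisimple (toEuclideanLin A) :=
    (isSymmetric_toEuclideanLin_iff.mpr hA).isFinitelySemisimple
  have hnil' : IsNilpotent (toEuclideanLin A) := hnil.map (toLpLinAlgEquiv 2)
  exact toEuclideanLin.map_eq_zero_iff.mp
    (Module.End.eq_zero_of_isNilpotent_of_isFinitelySemisimple hnil' hss)

theorem isNilpotent_units_conj_iff {M : Type*} [MonoidWithZero M] (u : Mˣ) {a : M} :
    IsNilpotent (↑u⁻¹ * a * u : M) ↔ IsNilpotent a := by
  simp [IsNilpotent, Units.conj_pow']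

variable {n : ℕ} {μ : Law n}

section Action

variable (g : GL (Fin n) ℝ)

theorem act_mulVec_mulVec (μ : Law n) (X Y : Fin n → ℝ) :
    act g μ (g.1 *ᵥ X) (g.1 *ᵥ Y) = g.1 *ᵥ μ X Y := by
  simp [act, mulVec_mulVec]

theorem inv_mulVec_act (μ : Law n) (X Y : Fin n → ℝ) :
    g⁻¹.1 *ᵥ act g μ X Y = μ (g⁻¹.1 *ᵥ X) (g⁻¹.1 *ᵥ Y) := by
  simp [act, mulVec_mulVec]

theorem IsDerivation.of_act {φ : Matrix (Fin n) (Fin n) ℝ} (hφ : IsDerivation (act g μ) φ) :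
    IsDerivation μ (g⁻¹.1 * φ * g.1) := fun X Y => by
  have h := congrArg (g⁻¹.1 *ᵥ ·) (hφ (g.1 *ᵥ X) (g.1 *ᵥ Y))
  simp only [act_mulVec_mulVec, mulVec_add, inv_mulVec_act] at h
  simpa only [mulVec_mulVec, Units.inv_mul, one_mulVec, ← mul_assoc] using h

theorem isLinearMap_act_left (hμ : ∀ Y, IsLinearMap ℝ fun X => μ X Y) (Y : Fin n → ℝ) :
    IsLinearMap ℝ fun X => act g μ X Y :=
  (g.1.mulVecLin ∘ₗ (hμ (g⁻¹.1 *ᵥ Y)).mk' _ ∘ₗ g⁻¹.1.mulVecLin).isLinear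

theorem act_mulVec_eq_zero {z : Fin n → ℝ} (hz : ∀ Y, μ z Y = 0) (Y : Fin n → ℝ) :
    act g μ (g.1 *ᵥ z) Y = 0 := by
  simp [act, mulVec_mulVec, hz]

end Action

theorem momentMap_eq_sum_vecMulVec (μ : Law n) :
    momentMap μ =
      (-2 : ℝ) • ∑ i, ∑ j, vecMulVec (fun k => μ (bVec k) (bVec i) j)
        (fun k => μ (bVec k) (bVec i) j) +
      ∑ i, ∑ j, vecMulVec (μ (bVec i) (bVec j)) (μ (bVec i) (bVec j)) := by
  ext k l
  simp only [momentMap, of_apply, Matrix.add_apply, Matrix.smul_apply, Matrix.sum_apply,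
    vecMulVec_apply, smul_eq_mul]
  ring

theorem dotProduct_vecMulVec_self_mulVec {ι R : Type*} [Fintype ι] [CommSemiring R]
    (a z : ι → R) : z ⬝ᵥ (vecMulVec a a *ᵥ z) = (a ⬝ᵥ z) ^ 2 := by
  rw [vecMulVec_mulVec, op_smul_eq_smul, dotProduct_smul, smul_eq_mul, dotProduct_comm z, sq]

theorem apply_bVec_dotProduct (hμ : ∀ Y, IsLinearMap ℝ fun X => μ X Y) (z Y : Fin n → ℝ)
    (j : Fin n) : (fun k => μ (bVec k) Y j) ⬝ᵥ z = μ z Y j :=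
  congrFun (((hμ Y).mk' _).toMatrix'_mulVec z) j

theorem dotProduct_momentMap_mulVec (hμ : ∀ Y, IsLinearMap ℝ fun X => μ X Y) (z : Fin n → ℝ) :
    z ⬝ᵥ (momentMap μ *ᵥ z) =
      -2 * ∑ i, ∑ j, μ z (bVec i) j ^ 2 + ∑ i, ∑ j, (μ (bVec i) (bVec j) ⬝ᵥ z) ^ 2 := by
  simp only [momentMap_eq_sum_vecMulVec, add_mulVec, smul_mulVec, sum_mulVec, dotProduct_add,
    dotProduct_smul, dotProduct_sum, dotProduct_vecMulVec_self_mulVec, apply_bVec_dotProduct hμ,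
    smul_eq_mul]

theorem nonneg_of_momentMap_eq_smul_one (hμ : ∀ Y, IsLinearMap ℝ fun X => μ X Y)
    {z : Fin n → ℝ} (hz₀ : z ≠ 0) (hz : ∀ Y, μ z Y = 0) {c : ℝ} (hc : momentMap μ = c • 1) :
    0 ≤ c := by
  have hform : c * (z ⬝ᵥ z) = ∑ i, ∑ j, (μ (bVec i) (bVec j) ⬝ᵥ z) ^ 2 := by
    simpa [hc, hz, smul_mulVec] using dotProduct_momentMap_mulVec hμ z
  have hpos : 0 < z ⬝ᵥ z := dotProduct_self_star_pos_iff.mpr hz₀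
  refine nonneg_of_mul_nonneg_left ?_ hpos
  rw [hform]
  positivity

theorem exists_ne_zero_forall_apply_eq_zero_of_lcs_eq_bot [Nontrivial (Fin n → ℝ)] {k : ℕ}
    (hk : lcs μ k = ⊥) : ∃ z ≠ 0, ∀ X, μ X z = 0 := by
  induction k with
  | zero => exact absurd hk top_ne_bot
  | succ k ih =>
    by_cases hk' : lcs μ k = ⊥
    · exact ih hk'
    obtain ⟨z, hz, hz₀⟩ := (Submodule.ne_bot_iff _).mp hk'
    refine ⟨z, hz₀, fun X => ?_⟩
    have hXz : μ X z ∈ lcs μ (k + 1) := Submodule.subset_span ⟨X, z, hz, rfl⟩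
    simpa [hk] using hXz

theorem IsNilpotentLaw.exists_ne_zero_forall_apply_eq_zero (hμ : IsNilpotentLaw μ) (hne : μ ≠ 0) :
    ∃ z ≠ 0, ∀ Y, μ z Y = 0 := by
  obtain ⟨⟨-, hskew, -⟩, k, hk⟩ := hμ
  have : Nontrivial (Fin n → ℝ) :=
    not_subsingleton_iff_nontrivial.mp fun _ => hne (Subsingleton.elim _ _)
  obtain ⟨z, hz₀, hz⟩ := exists_ne_zero_forall_apply_eq_zero_of_lcs_eq_bot hk
  exact ⟨z, hz₀, fun Y => by rw [hskew, hz, neg_zero]⟩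

theorem stmt_19_general (hμ : ∀ Y, IsLinearMap ℝ fun X => μ X Y)
    {z : Fin n → ℝ} (hz₀ : z ≠ 0) (hz : ∀ Y, μ z Y = 0)
    (hchar : ∀ ψ : Matrix (Fin n) (Fin n) ℝ, IsDerivation μ ψ → IsNilpotent ψ) :
    ¬ IsEinsteinNilradical μ := by
  rintro ⟨g, c, φ, hc, hsymm, hder, hm⟩
  have hnil : IsNilpotent φ := (isNilpotent_units_conj_iff g).mp (hchar _ (hder.of_act g))
  have hφ : φ = 0 := eq_zero_of_isHermitian_of_isNilpotent (by simpa using hsymm) hnil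
  have hgz₀ : g.1 *ᵥ z ≠ 0 :=
    (mulVec_injective_of_isUnit g.isUnit).ne_iff' (mulVec_zero _) |>.mpr hz₀
  exact hc.not_ge <| nonneg_of_momentMap_eq_smul_one (isLinearMap_act_left g hμ) hgz₀
    (act_mulVec_eq_zero g hz) (by rw [hm, hφ, add_zero])

/-- a nonzero characteristically nilpotent Lie algebra law (all of
whose derivations are nilpotent) is not an Einstein nilradical. -/
theorem stmt_19 (n : ℕ) (μ : Law n) (hμ : IsNilpotentLaw μ) (hne : μ ≠ 0)
    (hchar : ∀ ψ : Matrix (Fin n) (Fin n) ℝ, IsDerivation μ ψ → IsNilpotent ψ) :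
    ¬ IsEinsteinNilradical μ := by
  obtain ⟨z, hz₀, hz⟩ := hμ.exists_ne_zero_forall_apply_eq_zero hne
  exact stmt_19_general hμ.1.1.2 hz₀ hz hchar
end
end
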